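/- Let T be a positive integer, S a finite nonempty index set, and α^(1) : S → ℝ weights with ∑_{j∈S} α^(1)_j = 1. For each layer ℓ ≥ 2 let w^(ℓ) be an arbitrary function that assigns to any family of residual vectors (R_j)_{j ∈ S∪{i}} in ℝ^T a family of weights in ℝ^S, and define the residual recursion: R^(2)_m = X_m − ∑_{j∈S} α^(1)_j X_j for each m ∈ S∪{i} (using the same first-layer weights), and R^(ℓ+1)_m = R^(ℓ)_m − ∑_{j∈S} (w^(ℓ)(R^(ℓ)))_j · R^(ℓ)_j for ℓ ≥ 2. Suppose X_m = P + D_m for all m ∈ S∪{i}, with a common vector P ∈ ℝ^T. Then for every ℓ ≥ 2, the residual R^(ℓ)_i is the same as the residual obtained by replacing P with any other vector P' ∈ ℝ^T (keeping the perturbations D_m fixed); i.e., R^(ℓ)_i depends only on the perturbations (D_m) and not on the implicit pattern P. -/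

import Mathlib

/-- The TSNN residual recursion. `tsnnResid i S α1 w X n` is the residual
`R^(n+2)` of layer `n + 2`:
`R^(2)_m = X_m - ∑_{j∈S} α1_j • X_j`, and for `ℓ ≥ 2`,
`R^(ℓ+1)_m = R^(ℓ)_m - ∑_{j∈S} (w^(ℓ) (R^(ℓ)|_{S∪{i}}))_j • R^(ℓ)_j`,
where the layer-`ℓ` weights `w ℓ` are an arbitrary function of the family of
residual vectors indexed by `S ∪ {i}`. -/
noncomputable def tsnnResid {T : ℕ} {ι : Type*} [DecidableEq ι]
    (i : ι) (S : Finset ι) (α1 : ι → ℝ)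
    (w : ℕ → ((↥(insert i S)) → Fin T → ℝ) → ι → ℝ)
    (X : ι → Fin T → ℝ) : ℕ → ι → Fin T → ℝ
  | 0 => fun m => X m - ∑ j ∈ S, α1 j • X j
  | n + 1 => fun m =>
      tsnnResid i S α1 w X n m -
        ∑ j ∈ S, w (n + 2) (fun m' => tsnnResid i S α1 w X n m'.val) j •
          tsnnResid i S α1 w X n j

/-- iterated form of Lemma 1: if all signals indexed by
`S ∪ {i}` share a common implicit pattern (`X m = P + D m` versus
`X' m = P' + D m` with the same perturbations `D m`), and the first-layer
weights sum to 1, then for every layer `ℓ = n + 2 ≥ 2` the residual at `i` is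
independent of the implicit pattern: it is the same for `P` and `P'`. -/
theorem tsnn_residuals_independent_of_pattern
    {T : ℕ} (hT : 0 < T) {ι : Type*} [DecidableEq ι]
    (i : ι) (S : Finset ι) (hS : S.Nonempty)
    (α1 : ι → ℝ) (hα : ∑ j ∈ S, α1 j = 1)
    (w : ℕ → ((↥(insert i S)) → Fin T → ℝ) → ι → ℝ)
    (P P' : Fin T → ℝ) (D : ι → Fin T → ℝ)
    (X X' : ι → Fin T → ℝ)
    (hX : ∀ m ∈ insert i S, X m = P + D m)
    (hX' : ∀ m ∈ insert i S, X' m = P' + D m) :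
    ∀ n : ℕ, tsnnResid i S α1 w X n i = tsnnResid i S α1 w X' n i := by
  have first : ∀ (Q : Fin T → ℝ) (Y : ι → Fin T → ℝ),
      (∀ m ∈ insert i S, Y m = Q + D m) → ∀ m ∈ insert i S,
        Y m - ∑ j ∈ S, α1 j • Y j = D m - ∑ j ∈ S, α1 j • D j := by
    intro Q Y hY m hm
    have hsum : ∑ j ∈ S, α1 j • Y j = Q + ∑ j ∈ S, α1 j • D j := by
      rw [Finset.sum_congr rfl (fun j hj => by
        rw [hY j (Finset.mem_insert_of_mem hj), smul_add]),
        Finset.sum_add_distrib, ← Finset.sum_smul, hα, one_smul]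
    rw [hsum, hY m hm]
    abel
  have key : ∀ n : ℕ, ∀ m ∈ insert i S,
      tsnnResid i S α1 w X n m = tsnnResid i S α1 w X' n m := by
    intro n
    induction n with
    | zero =>
      intro m hm
      simp only [tsnnResid]
      rw [first P X hX m hm, first P' X' hX' m hm]
    | succ n ih =>
      intro m hm
      have hfam : (fun m' : ↥(insert i S) => tsnnResid i S α1 w X n m'.val) =
          fun m' : ↥(insert i S) => tsnnResid i S α1 w X' n m'.val :=
        funext fun m' => ih m'.val m'.property
      simp only [tsnnResid]
      rw [ih m hm, hfam]
      congr 1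
      exact Finset.sum_congr rfl fun j hj => by
        rw [ih j (Finset.mem_insert_of_mem hj)]
  exact fun n => key n i (Finset.mem_insert_self i S)
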